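/- For any N points a_1,…,a_N on the one-dimensional torus 𝕋 = ℝ/ℤ, the squared quadratic Wasserstein distance of the empirical measure from the uniform measure equals W₂²((1/N)∑δ_{a_n}, Vol) = ∑_{k≠0} (1/(4π²k²)) |(1/N)∑_{n=1}^N e^{2πik a_n}|², and consequently W₂(A_N, Vol) = 2^{−1/2} D_{per,2}(A_N), where D_{per,2}² (A_N) = (1/3)∑_{k≠0} (1/max{2π²k²/3,1}) |(1/N)∑_n e^{2πik a_n}|². -/

import Mathlib

/-! The proof is Kantorovich duality on the circle, with an explicit optimal plan and an explicit
optimal potential.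

Let `bq t = ‖t‖² - ‖t‖` on `𝕋`. On `[0,1]` it is `s² - s`, so up to a constant it is the second
Bernoulli function, and its Fourier series is `∑_{k≠0} e(kt)/(4π²k²) = (bq t + 1/6)/2`
(`hasSum_bq`). Expanding the square, the right-hand side of Graham's formula is the finite double
sum `N⁻² ∑ₙ ∑ₘ (bq (aₙ - aₘ) + 1/6)/2` (`hasSum_energy`).

For the transport side, lift the points to `0 ≤ b₀ ≤ … ≤ b_{N-1} < 1` with mean `m`, and send the
interval of length `1/N` between `m - 1/2 + i/N` and `m - 1/2 + (i+1)/N` to `bᵢ`. This is a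
coupling of the empirical measure with the uniform one. The potential is
`φ(x) = N⁻¹ ∑ⱼ bq (x - bⱼ)`. Since `bq s = min_{k ∈ ℤ} ((s-k)² - (s-k))`, every choice of integers
`kⱼ` bounds `φ` above by a quadratic with leading coefficient one, and two such choices, both exact
at `bᵢ`, yield for all real `x` and all `y` in the `i`-th interval
`(x-y)² - φ(x) ≥ (bᵢ-y)² - φ(bᵢ)` (`potential_key`). Hence `φ` and
`ψ(y) = minᵢ (d(bᵢ,y)² - φ(bᵢ))` satisfy `φ(x) + ψ(y) ≤ d(x,y)²`, with equality on the support of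
the plan, so the plan is optimal. Its cost is an elementary integral, and it agrees with the double
sum (`energy_eq_cost`). -/

open MeasureTheory Real

instance : Fact ((0:ℝ) < 1) := ⟨one_pos⟩

/-- The squared quadratic Wasserstein distance between two measures on the
one-dimensional torus `𝕋 = ℝ/ℤ` (with its geodesic distance), as the infimum
of the transport cost over all couplings. -/
noncomputable def W2sq (μ ν : Measure (AddCircle (1:ℝ))) : ℝ :=
  sInf {c : ℝ | ∃ pl : Measure (AddCircle (1:ℝ) × AddCircle (1:ℝ)),
    pl.map Prod.fst = μ ∧ pl.map Prod.snd = ν ∧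
      c = ∫ p, dist p.1 p.2 ^ 2 ∂pl}

/-- The squared periodic `L²` discrepancy of `a_1, …, a_N ∈ 𝕋`, via its
Fourier-analytic formula. -/
noncomputable def dper2sq (N : ℕ) (a : Fin N → AddCircle (1:ℝ)) : ℝ :=
  (1/3) * ∑' k : {k : ℤ // k ≠ 0},
    (max (2*π^2*((k:ℤ):ℝ)^2/3) 1)⁻¹ * ‖(1/N : ℂ) * ∑ n, fourier (k:ℤ) (a n)‖^2

/-! ### The quadratic kernel and its Fourier series -/

/-- The kernel `‖t‖² - ‖t‖` on the circle, where `‖t‖` is the distance to the nearest integer. It is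
the second periodic Bernoulli function minus `1/6`. -/
noncomputable def bq (t : AddCircle (1:ℝ)) : ℝ := ‖t‖^2 - ‖t‖

lemma continuous_bq : Continuous bq := by unfold bq; fun_prop

/-- Among the lifts of a point of the circle, the polynomial `s² - s` is smallest at those in
`[0,1]`. -/
lemma bq_le (s : ℝ) : bq (s : AddCircle (1:ℝ)) ≤ s^2 - s := by
  have h : ‖(s : AddCircle (1:ℝ))‖ = |s - round s| := UnitAddCircle.norm_eq
  have h2 := abs_sub_round s
  rw [bq, h]
  set r : ℤ := round s
  obtain ⟨u, hu⟩ : ∃ u : ℝ, u = s - r := ⟨_, rfl⟩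
  have hs : s = u + r := by linarith
  rw [← hu] at h2 ⊢
  rw [hs, sq_abs]
  obtain ⟨h3, h4⟩ := abs_le.1 h2
  rcases le_or_gt 1 r with hr | hr
  · have hr' : (1:ℝ) ≤ r := by exact_mod_cast hr
    rcases abs_cases u with ⟨h, h'⟩ | ⟨h, h'⟩ <;> rw [h]
    · nlinarith
    · nlinarith [mul_nonneg (sub_nonneg.2 hr') (show (0:ℝ) ≤ r + 2 * u by linarith)]
  · have hr' : (r:ℝ) ≤ 0 := by exact_mod_cast (by omega : r ≤ 0)
    rcases abs_cases u with ⟨h, h'⟩ | ⟨h, h'⟩ <;> rw [h]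
    · nlinarith [mul_nonneg (neg_nonneg.2 hr') (show (0:ℝ) ≤ 1 - r - 2 * u by linarith)]
    · nlinarith [mul_nonneg (show (0:ℝ) ≤ 1 - r by linarith)
        (show (0:ℝ) ≤ - r - 2 * u by linarith)]

lemma bq_eq {s : ℝ} (h0 : 0 ≤ s) (h1 : s ≤ 1) : bq (s : AddCircle (1:ℝ)) = s^2 - s := by
  refine le_antisymm (bq_le s) ?_
  have h : ‖(s : AddCircle (1:ℝ))‖ = |s - round s| := UnitAddCircle.norm_eq
  have h2 := abs_sub_round s
  have hle0 : |s - round s| ≤ |s| := by simpa using round_le s 0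
  have hle1 : |s - round s| ≤ |s - 1| := by simpa using round_le s 1
  rw [bq, h]
  rw [abs_of_nonneg h0] at hle0
  rw [abs_of_nonpos (show s - 1 ≤ 0 by linarith)] at hle1
  nlinarith [mul_nonneg (sub_nonneg.2 hle0) (show 0 ≤ 1 - s - |s - round s| by linarith)]

lemma bq_neg (t : AddCircle (1:ℝ)) : bq (-t) = bq t := by simp [bq]

lemma exists_lift (t : AddCircle (1:ℝ)) : ∃ x : ℝ, 0 ≤ x ∧ x < 1 ∧ (x : AddCircle (1:ℝ)) = t := by
  refine ⟨(AddCircle.equivIco (1:ℝ) 0 t : ℝ), ?_, ?_, AddCircle.coe_equivIco⟩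
  · exact (AddCircle.equivIco (1:ℝ) 0 t).2.1
  · simpa using (AddCircle.equivIco (1:ℝ) 0 t).2.2

lemma hasSum_bq (t : AddCircle (1:ℝ)) :
    HasSum (fun k : {k : ℤ // k ≠ 0} => 1/(4*π^2*((k:ℤ):ℝ)^2) * (fourier (k:ℤ) t).re)
      ((bq t + 1/6)/2) := by
  obtain ⟨x, h0, h1, rfl⟩ := exists_lift t
  have h := hasSum_one_div_pow_mul_fourier_mul_bernoulliFun (k := 2) le_rfl (x := x) ⟨h0, h1.le⟩
  have h2 := (Complex.hasSum_re h).mul_left (1/(4*π^2))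
  have h3 : HasSum (fun k : ℤ => 1/(4*π^2*(k:ℝ)^2) * (fourier k (x : AddCircle (1:ℝ))).re)
      ((bq (x : AddCircle (1:ℝ)) + 1/6)/2) := by
    have e1 : ∀ k : ℤ, 1/(4*π^2*(k:ℝ)^2) * (fourier k (x : AddCircle (1:ℝ))).re
        = 1/(4*π^2) * (1 / (k:ℂ)^2 * fourier k (x : AddCircle (1:ℝ))).re := by
      intro k
      have : (1 / (k:ℂ)^2 * fourier k (x : AddCircle (1:ℝ))).re
          = 1/(k:ℝ)^2 * (fourier k (x : AddCircle (1:ℝ))).re := by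
        rw [← Complex.re_ofReal_mul]; push_cast; rfl
      rw [this]
      simp only [one_div, mul_inv]; ring
    have e2 : (bq (x : AddCircle (1:ℝ)) + 1/6)/2 = 1/(4*π^2) *
        (-(2 * (π:ℂ) * Complex.I) ^ 2 / ((Nat.factorial 2 : ℕ) : ℂ)
          * ((bernoulliFun 2 x : ℝ) : ℂ)).re := by
      have : (-(2 * (π:ℂ) * Complex.I) ^ 2 / ((Nat.factorial 2 : ℕ) : ℂ) * ((bernoulliFun 2 x : ℝ) : ℂ))
          = ((2 * π^2 * bernoulliFun 2 x : ℝ) : ℂ) := by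
        rw [mul_pow, Complex.I_sq]; push_cast [Nat.factorial]; ring
      rw [this, Complex.ofReal_re, bernoulliFun_two, bq_eq h0 h1.le]
      have := Real.pi_ne_zero
      field_simp
      ring
    rw [e2]
    exact (funext e1) ▸ h2
  -- the term `k = 0` is `1/0 * _ = 0`, so it may be dropped
  refine (hasSum_subtype_iff_of_support_subset (s := {k : ℤ | k ≠ 0}) ?_).2 h3
  intro k hk hk0
  apply hk
  simp [hk0]

/-- Expanding the squares: Graham's Fourier series equals a finite pair-interaction energy. -/
lemma hasSum_energy (N : ℕ) (a : Fin N → AddCircle (1:ℝ)) :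
    HasSum (fun k : {k : ℤ // k ≠ 0} =>
        (1/(4*π^2*((k:ℤ):ℝ)^2)) * ‖(1/N : ℂ) * ∑ n, fourier (k:ℤ) (a n)‖^2)
      ((1/(N:ℝ)^2) * ∑ n, ∑ m, (bq (a n - a m) + 1/6)/2) := by
  have h := (hasSum_sum (s := Finset.univ) fun n _ =>
    hasSum_sum (s := Finset.univ) fun m _ => hasSum_bq (a n - a m)).mul_left (1/(N:ℝ)^2)
  suffices e : (fun k : {k : ℤ // k ≠ 0} =>
      (1/(4*π^2*((k:ℤ):ℝ)^2)) * ‖(1/N : ℂ) * ∑ n, fourier (k:ℤ) (a n)‖^2)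
      = fun k : {k : ℤ // k ≠ 0} => (1/(N:ℝ)^2) * ∑ n, ∑ m,
        1/(4*π^2*((k:ℤ):ℝ)^2) * (fourier (k:ℤ) (a n - a m)).re by
    rw [e]; exact h
  ext k
  have h1 : ‖∑ n, fourier (k:ℤ) (a n)‖^2 = ∑ n, ∑ m, (fourier (k:ℤ) (a n - a m)).re := by
    have : ((‖∑ n, fourier (k:ℤ) (a n)‖^2 : ℝ) : ℂ)
        = ∑ n, ∑ m, fourier (k:ℤ) (a n - a m) := by
      push_cast
      rw [← Complex.mul_conj', map_sum, Finset.sum_mul_sum]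
      refine Finset.sum_congr rfl fun n _ => Finset.sum_congr rfl fun m _ => ?_
      rw [← fourier_neg]
      simp [fourier_apply, sub_eq_add_neg, smul_add, AddCircle.toCircle_add]
    rw [← Complex.ofReal_re (‖∑ n, fourier (k:ℤ) (a n)‖^2), this]
    simp only [Complex.re_sum]
  rw [norm_mul, mul_pow, h1]
  have h2 : ‖(1/N : ℂ)‖^2 = 1/(N:ℝ)^2 := by simp
  rw [h2]
  simp only [← Finset.mul_sum]
  ring

/-! ### The potential -/

/-- The Kantorovich potential of the points `b j`, attached to the variable distributed according to
the empirical measure. -/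
noncomputable def pot {N : ℕ} (b : Fin N → ℝ) (x : AddCircle (1:ℝ)) : ℝ :=
  (1/(N:ℝ)) * ∑ j, bq (x - (b j : AddCircle (1:ℝ)))

lemma continuous_pot {N : ℕ} (b : Fin N → ℝ) : Continuous (pot b) := by
  unfold pot
  have := continuous_bq
  fun_prop

/-- Left endpoint of the `i`-th transport cell. The cells tile an interval of length one which is
centred at the mean of the points. -/
noncomputable def cellEnd {N : ℕ} (b : Fin N → ℝ) (i : ℕ) : ℝ :=
  (∑ j, b j)/N - 1/2 + i/N

/-- An integer choice of branches `k j` which is exact at `b i` makes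
`y = m + 1/2 + (∑ k j)/N` a transport target of `b i`. -/
lemma pot_le_of_branch {N : ℕ} (hN : 1 ≤ N) (b : Fin N → ℝ) (i : Fin N) (k : Fin N → ℤ)
    (hk : ∀ j, 0 ≤ b i - b j - k j ∧ b i - b j - k j ≤ 1) (x y : ℝ)
    (hy : y = (∑ j, b j)/N + 1/2 + (∑ j, (k j : ℝ))/N) :
    pot b (x : AddCircle (1:ℝ)) - pot b (b i : AddCircle (1:ℝ)) ≤ (x-y)^2 - (b i - y)^2 := by
  have hN' : (0:ℝ) < N := by exact_mod_cast hN
  have hc : ∀ (s : ℝ) (j : Fin N), (s : AddCircle (1:ℝ)) - (b j : AddCircle (1:ℝ))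
      = ((s - b j - k j : ℝ) : AddCircle (1:ℝ)) := by
    intro s j
    have : ((k j : ℝ) : AddCircle (1:ℝ)) = 0 :=
      (AddCircle.coe_eq_zero_iff 1).2 ⟨k j, by simp⟩
    rw [AddCircle.coe_sub, AddCircle.coe_sub, this, sub_zero]
  have h1 : ∑ j, bq ((x : AddCircle (1:ℝ)) - (b j : AddCircle (1:ℝ)))
        - ∑ j, bq ((b i : AddCircle (1:ℝ)) - (b j : AddCircle (1:ℝ)))
      ≤ ∑ j, (x^2 - (b i)^2 - (x - b i) * (2 * b j + 2 * k j + 1)) := by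
    rw [← Finset.sum_sub_distrib]
    refine Finset.sum_le_sum fun j _ => ?_
    rw [hc, hc, bq_eq (hk j).1 (hk j).2]
    have := bq_le (x - b j - k j)
    linarith
  have h2 : ∑ j, (x^2 - (b i)^2 - (x - b i) * (2 * b j + 2 * k j + 1))
      = N * ((x-y)^2 - (b i - y)^2) := by
    rw [Finset.sum_sub_distrib, ← Finset.mul_sum, Finset.sum_add_distrib, Finset.sum_add_distrib,
      ← Finset.mul_sum, ← Finset.mul_sum, hy]
    simp only [Finset.sum_const, Finset.card_univ, Fintype.card_fin, nsmul_eq_mul]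
    field_simp
    ring
  rw [h2] at h1
  rw [pot, pot, ← mul_sub, one_div, inv_mul_le_iff₀ hN']
  exact h1

lemma sum_ite_lt {N : ℕ} (i : Fin N) : ∑ j : Fin N, (if i < j then (1:ℝ) else 0) = N - 1 - i := by
  have : Finset.univ.filter (fun j => i < j) = Finset.Ioi i := by ext; simp
  have hi := i.2
  have hc : ((N - 1 - (i:ℕ) : ℕ) : ℝ) + i + 1 = N := by
    exact_mod_cast (by omega : N - 1 - (i:ℕ) + i + 1 = N)
  rw [Finset.sum_boole, this, Fin.card_Ioi]
  linarith

lemma sum_ite_gt {N : ℕ} (i : Fin N) : ∑ j : Fin N, (if j < i then (1:ℝ) else 0) = i := by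
  have : Finset.univ.filter (fun j => j < i) = Finset.Iio i := by ext; simp
  rw [Finset.sum_boole, this, Fin.card_Iio]

/-- Points of the `i`-th cell are transported to `b i`: the function `x ↦ (x-y)² - φ(x)` on the
line is minimal at `b i`. -/
lemma potential_key {N : ℕ} (hN : 1 ≤ N) (b : Fin N → ℝ) (hb : Monotone b)
    (h0 : ∀ i, 0 ≤ b i) (h1 : ∀ i, b i < 1) (i : Fin N) (x y : ℝ)
    (hy0 : cellEnd b i ≤ y) (hy1 : y ≤ cellEnd b (i+1)) :
    pot b (x : AddCircle (1:ℝ)) - pot b (b i : AddCircle (1:ℝ)) ≤ (x-y)^2 - (b i - y)^2 := by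
  have hN' : (0:ℝ) < N := by exact_mod_cast hN
  have hA := pot_le_of_branch hN b i (fun j => if i < j then -1 else 0) (fun j => by
    split_ifs with h
    · have := hb h.le; have := h0 i; have := h1 j; push_cast; constructor <;> linarith
    · have := hb (not_lt.1 h); have := h0 j; have := h1 i; push_cast; constructor <;> linarith)
    x (cellEnd b (i+1)) (by
      have : ∑ j : Fin N, (((if i < j then -1 else 0 : ℤ)) : ℝ) = - (N - 1 - i) := by
        rw [← sum_ite_lt i, ← Finset.sum_neg_distrib]
        refine Finset.sum_congr rfl fun j _ => ?_
        split_ifs <;> simp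
      rw [this, cellEnd]; push_cast; field_simp; ring)
  have hB := pot_le_of_branch hN b i (fun j => if j < i then 0 else -1) (fun j => by
    split_ifs with h
    · have := hb h.le; have := h0 j; have := h1 i; push_cast; constructor <;> linarith
    · have := hb (not_lt.1 h); have := h0 i; have := h1 j; push_cast; constructor <;> linarith)
    x (cellEnd b i) (by
      have : ∑ j : Fin N, (((if j < i then 0 else -1 : ℤ)) : ℝ) = i - N := by
        have h2 : ∀ j : Fin N, (((if j < i then 0 else -1 : ℤ)) : ℝ)
            = (if j < i then (1:ℝ) else 0) - 1 := by
          intro j; split_ifs <;> simp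
        simp only [h2, Finset.sum_sub_distrib, sum_ite_gt]
        simp
      rw [this, cellEnd]; field_simp; ring)
  -- the right-hand side is affine in `y`, with slope `-2 (x - b i)`
  rcases le_total (b i) x with h | h
  · nlinarith [mul_nonneg (sub_nonneg.2 h) (sub_nonneg.2 hy1)]
  · nlinarith [mul_nonneg (sub_nonneg.2 h) (sub_nonneg.2 hy0)]

lemma exists_lift_dist_eq (t : AddCircle (1:ℝ)) (y : ℝ) :
    ∃ x : ℝ, (x : AddCircle (1:ℝ)) = t ∧ dist t (y : AddCircle (1:ℝ)) = |x - y| := by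
  obtain ⟨s, -, -, rfl⟩ := exists_lift t
  refine ⟨s - round (s - y), ?_, ?_⟩
  · have : ((round (s - y) : ℝ) : AddCircle (1:ℝ)) = 0 :=
      (AddCircle.coe_eq_zero_iff 1).2 ⟨round (s - y), by simp⟩
    rw [AddCircle.coe_sub, this, sub_zero]
  · rw [dist_eq_norm, ← AddCircle.coe_sub]
    have h : ‖((s - y : ℝ) : AddCircle (1:ℝ))‖ = |s - y - round (s - y)| := UnitAddCircle.norm_eq
    rw [h]
    congr 1
    ring

/-- On its cell, the transport moves mass along a shortest arc. -/
lemma dist_sq_cell {N : ℕ} (hN : 1 ≤ N) (b : Fin N → ℝ) (hb : Monotone b)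
    (h0 : ∀ i, 0 ≤ b i) (h1 : ∀ i, b i < 1) (i : Fin N) (y : ℝ)
    (hy0 : cellEnd b i ≤ y) (hy1 : y ≤ cellEnd b (i+1)) :
    dist (b i : AddCircle (1:ℝ)) (y : AddCircle (1:ℝ)) ^ 2 = (b i - y)^2 := by
  apply le_antisymm
  · rw [← sq_abs (b i - y)]
    gcongr
    rw [dist_eq_norm, ← AddCircle.coe_sub]
    have h : ‖((b i - y : ℝ) : AddCircle (1:ℝ))‖ = |b i - y - round (b i - y)| :=
      UnitAddCircle.norm_eq
    rw [h]
    simpa using round_le (b i - y) 0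
  · obtain ⟨x, hx, hd⟩ := exists_lift_dist_eq (b i : AddCircle (1:ℝ)) y
    have := potential_key hN b hb h0 h1 i x y hy0 hy1
    rw [hx] at this
    rw [hd, sq_abs]
    linarith

lemma potential_key_circle {N : ℕ} (hN : 1 ≤ N) (b : Fin N → ℝ) (hb : Monotone b)
    (h0 : ∀ i, 0 ≤ b i) (h1 : ∀ i, b i < 1) (i : Fin N) (t : AddCircle (1:ℝ)) (y : ℝ)
    (hy0 : cellEnd b i ≤ y) (hy1 : y ≤ cellEnd b (i+1)) :
    dist (b i : AddCircle (1:ℝ)) (y : AddCircle (1:ℝ)) ^ 2 - pot b (b i : AddCircle (1:ℝ))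
      ≤ dist t (y : AddCircle (1:ℝ)) ^ 2 - pot b t := by
  obtain ⟨x, rfl, hd⟩ := exists_lift_dist_eq t y
  have := potential_key hN b hb h0 h1 i x y hy0 hy1
  rw [hd, sq_abs, dist_sq_cell hN b hb h0 h1 i y hy0 hy1]
  linarith

/-! ### The optimal plan -/

/-- The `i`-th transport cell, as a subset of the line. -/
noncomputable def cell {N : ℕ} (b : Fin N → ℝ) (i : ℕ) : Set ℝ :=
  Set.Ioc (cellEnd b i) (cellEnd b (i+1))

lemma cellEnd_le_succ {N : ℕ} (b : Fin N → ℝ) (i : ℕ) : cellEnd b i ≤ cellEnd b (i+1) := by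
  unfold cellEnd
  gcongr
  exact Nat.le_succ i

lemma cellEnd_mono {N : ℕ} (b : Fin N → ℝ) : Monotone (cellEnd b) :=
  monotone_nat_of_le_succ (cellEnd_le_succ b)

lemma volume_cell {N : ℕ} (b : Fin N → ℝ) (i : ℕ) (hN : 1 ≤ N) :
    volume (cell b i) = (N : ENNReal)⁻¹ := by
  have hN' : (0:ℝ) < N := by exact_mod_cast hN
  rw [cell, Real.volume_Ioc]
  have : cellEnd b (i+1) - cellEnd b i = (N:ℝ)⁻¹ := by
    unfold cellEnd; push_cast; field_simp; ring
  rw [this, ENNReal.ofReal_inv_of_pos hN', ENNReal.ofReal_natCast]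

lemma sum_restrict_cell {N : ℕ} (b : Fin N → ℝ) (n : ℕ) :
    ∑ i ∈ Finset.range n, (volume : Measure ℝ).restrict (cell b i)
      = volume.restrict (Set.Ioc (cellEnd b 0) (cellEnd b n)) := by
  induction n with
  | zero => simp
  | succ n ih =>
    rw [Finset.sum_range_succ, ih, cell, ← Measure.restrict_union _ measurableSet_Ioc,
      Set.Ioc_union_Ioc_eq_Ioc (cellEnd_mono b (Nat.zero_le n)) (cellEnd_le_succ b n)]
    rw [Set.disjoint_left]
    intro x hx hx'
    exact absurd hx.2 (not_le.2 hx'.1)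

/-- The optimal plan: the `i`-th cell, projected to the circle, is sent to `b i`. -/
noncomputable def plan {N : ℕ} (b : Fin N → ℝ) : Measure (AddCircle (1:ℝ) × AddCircle (1:ℝ)) :=
  ∑ i : Fin N, ((volume : Measure ℝ).restrict (cell b i)).map
    (fun y : ℝ => ((b i : AddCircle (1:ℝ)), (y : AddCircle (1:ℝ))))

lemma measurable_graph (c : AddCircle (1:ℝ)) :
    Measurable (fun y : ℝ => (c, (y : AddCircle (1:ℝ)))) :=
  measurable_const.prodMk AddCircle.measurable_mk'

lemma plan_fst {N : ℕ} (hN : 1 ≤ N) (b : Fin N → ℝ) :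
    (plan b).map Prod.fst
      = (N : ENNReal)⁻¹ • ∑ n, Measure.dirac (b n : AddCircle (1:ℝ)) := by
  rw [plan, Measure.map_finset_sum measurable_fst.aemeasurable, Finset.smul_sum]
  refine Finset.sum_congr rfl fun i _ => ?_
  rw [Measure.map_map measurable_fst (measurable_graph _)]
  have : (Prod.fst ∘ fun y : ℝ => ((b i : AddCircle (1:ℝ)), (y : AddCircle (1:ℝ))))
      = fun _ => (b i : AddCircle (1:ℝ)) := rfl
  rw [this, Measure.map_const, Measure.restrict_apply_univ, volume_cell b i hN]

lemma plan_snd {N : ℕ} (hN : 1 ≤ N) (b : Fin N → ℝ) :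
    (plan b).map Prod.snd = volume := by
  have hN' : (N:ℝ) ≠ 0 := by exact_mod_cast (by omega : N ≠ 0)
  rw [plan, Measure.map_finset_sum measurable_snd.aemeasurable]
  have : ∀ i : Fin N, (((volume : Measure ℝ).restrict (cell b i)).map
      (fun y : ℝ => ((b i : AddCircle (1:ℝ)), (y : AddCircle (1:ℝ))))).map Prod.snd
      = ((volume : Measure ℝ).restrict (cell b i)).map
        (fun y : ℝ => (y : AddCircle (1:ℝ))) := by
    intro i
    rw [Measure.map_map measurable_snd (measurable_graph _)]
    rfl
  simp only [this]
  rw [← Measure.map_finset_sum AddCircle.measurable_mk'.aemeasurable,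
    Fin.sum_univ_eq_sum_range (fun i => (volume : Measure ℝ).restrict (cell b i)),
    sum_restrict_cell]
  have h1 : cellEnd b N = cellEnd b 0 + 1 := by
    unfold cellEnd; push_cast; field_simp; ring
  rw [h1]
  exact (UnitAddCircle.measurePreserving_mk (cellEnd b 0)).map_eq

lemma integrable_of_continuous {X : Type*} [TopologicalSpace X] [CompactSpace X]
    [MeasurableSpace X] [OpensMeasurableSpace X] (μ : Measure X) [IsFiniteMeasure μ] {f : X → ℝ}
    (hf : Continuous f) : Integrable f μ :=
  hf.integrable_of_hasCompactSupport (HasCompactSupport.of_compactSpace f)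

lemma isFinite_of_snd {pl : Measure (AddCircle (1:ℝ) × AddCircle (1:ℝ))}
    (h : pl.map Prod.snd = volume) : IsFiniteMeasure pl := by
  constructor
  have : pl Set.univ = (pl.map Prod.snd) Set.univ := by
    rw [Measure.map_apply measurable_snd MeasurableSet.univ, Set.preimage_univ]
  rw [this, h]
  exact measure_lt_top _ _

lemma integral_plan {N : ℕ} (b : Fin N → ℝ)
    {F : AddCircle (1:ℝ) × AddCircle (1:ℝ) → ℝ} (hF : Continuous F) :
    ∫ p, F p ∂(plan b) = ∑ i : Fin N, ∫ y in cell b i,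
      F ((b i : AddCircle (1:ℝ)), (y : AddCircle (1:ℝ))) := by
  have hfin : ∀ i : Fin N, IsFiniteMeasure ((volume : Measure ℝ).restrict (cell b i)) := by
    intro i
    constructor
    rw [Measure.restrict_apply_univ, cell, Real.volume_Ioc]
    exact ENNReal.ofReal_lt_top
  rw [plan, integral_finsetSum_measure]
  · refine Finset.sum_congr rfl fun i _ => ?_
    rw [integral_map (measurable_graph _).aemeasurable hF.aestronglyMeasurable]
  · intro i _
    have := hfin i
    exact integrable_of_continuous _ hF

/-- Couplings with the same marginals agree on functions `φ(x) + ψ(y)`. -/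
lemma integral_split {pl pl' : Measure (AddCircle (1:ℝ) × AddCircle (1:ℝ))}
    (h1 : pl.map Prod.fst = pl'.map Prod.fst) (h2 : pl.map Prod.snd = volume)
    (h2' : pl'.map Prod.snd = volume) {f g : AddCircle (1:ℝ) → ℝ} (hf : Continuous f)
    (hg : Continuous g) :
    ∫ p, (f p.1 + g p.2) ∂pl = ∫ p, (f p.1 + g p.2) ∂pl' := by
  have key : ∀ q : Measure (AddCircle (1:ℝ) × AddCircle (1:ℝ)), q.map Prod.snd = volume →
      ∫ p, (f p.1 + g p.2) ∂q = ∫ x, f x ∂(q.map Prod.fst) + ∫ y, g y ∂(q.map Prod.snd) := by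
    intro q hq
    have := isFinite_of_snd hq
    have hadd : ∫ p, (f p.1 + g p.2) ∂q = ∫ p, f p.1 ∂q + ∫ p, g p.2 ∂q :=
      integral_add (integrable_of_continuous q (hf.comp continuous_fst))
        (integrable_of_continuous q (hg.comp continuous_snd))
    rw [hadd, integral_map measurable_fst.aemeasurable hf.aestronglyMeasurable,
      integral_map measurable_snd.aemeasurable hg.aestronglyMeasurable]
  rw [key pl h2, key pl' h2', h1, h2, h2']

/-- Kantorovich duality: the plan is optimal. -/
lemma plan_optimal {N : ℕ} (hN : 1 ≤ N) (b : Fin N → ℝ) (hb : Monotone b)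
    (h0 : ∀ i, 0 ≤ b i) (h1 : ∀ i, b i < 1)
    {pl : Measure (AddCircle (1:ℝ) × AddCircle (1:ℝ))}
    (hfst : pl.map Prod.fst = (N : ENNReal)⁻¹ • ∑ n, Measure.dirac (b n : AddCircle (1:ℝ)))
    (hsnd : pl.map Prod.snd = volume) :
    ∫ p, dist p.1 p.2 ^ 2 ∂(plan b) ≤ ∫ p, dist p.1 p.2 ^ 2 ∂pl := by
  have hne : (Finset.univ : Finset (Fin N)).Nonempty := ⟨⟨0, hN⟩, Finset.mem_univ _⟩
  have hcost : Continuous fun p : AddCircle (1:ℝ) × AddCircle (1:ℝ) => dist p.1 p.2 ^ 2 := by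
    fun_prop
  let ψ : AddCircle (1:ℝ) → ℝ := fun t => Finset.univ.inf' hne fun i : Fin N =>
    dist (b i : AddCircle (1:ℝ)) t ^ 2 - pot b (b i : AddCircle (1:ℝ))
  have hψ : Continuous ψ := by
    refine Continuous.finset_inf'_apply hne (f := fun (i : Fin N) (t : AddCircle (1:ℝ)) =>
      dist (b i : AddCircle (1:ℝ)) t ^ 2 - pot b (b i : AddCircle (1:ℝ))) fun i _ => ?_
    fun_prop
  have hφ := continuous_pot b
  have hsum : Continuous fun p : AddCircle (1:ℝ) × AddCircle (1:ℝ) => pot b p.1 + ψ p.2 := by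
    fun_prop
  have hψcell : ∀ (i : Fin N), ∀ y ∈ cell b i, ψ (y : AddCircle (1:ℝ))
      = dist (b i : AddCircle (1:ℝ)) (y : AddCircle (1:ℝ)) ^ 2
        - pot b (b i : AddCircle (1:ℝ)) := by
    intro i y hy
    apply le_antisymm
    · exact Finset.inf'_le _ (Finset.mem_univ i)
    · refine Finset.le_inf' _ _ fun j _ => ?_
      exact potential_key_circle hN b hb h0 h1 i _ y hy.1.le hy.2
  -- the cells cover the circle
  have hcover : ∀ t : AddCircle (1:ℝ), ∃ (i : Fin N) (y : ℝ), y ∈ cell b i ∧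
      (y : AddCircle (1:ℝ)) = t := by
    intro t
    have hN' : (0:ℝ) < N := by exact_mod_cast hN
    obtain ⟨y, hy, rfl⟩ : ∃ y ∈ Set.Ioc (cellEnd b 0) (cellEnd b 0 + 1),
        (y : AddCircle (1:ℝ)) = t :=
      ⟨(AddCircle.equivIoc (1:ℝ) (cellEnd b 0) t : ℝ), (AddCircle.equivIoc (1:ℝ) _ t).2,
        AddCircle.coe_equivIoc⟩
    have hlt : (⌈N * (y - cellEnd b 0)⌉ - 1).toNat < N ∧
        (0:ℤ) < ⌈N * (y - cellEnd b 0)⌉ := by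
      have h3 : 0 < ⌈N * (y - cellEnd b 0)⌉ :=
        Int.ceil_pos.2 (mul_pos hN' (by linarith [hy.1]))
      have h4 : ⌈N * (y - cellEnd b 0)⌉ ≤ N := by
        rw [Int.ceil_le]
        push_cast
        nlinarith [hy.2]
      omega
    refine ⟨⟨(⌈N * (y - cellEnd b 0)⌉ - 1).toNat, hlt.1⟩, y, ?_, rfl⟩
    have h5 : (((⌈N * (y - cellEnd b 0)⌉ - 1).toNat : ℕ) : ℝ)
        = ⌈N * (y - cellEnd b 0)⌉ - 1 := by
      have : (((⌈N * (y - cellEnd b 0)⌉ - 1).toNat : ℕ) : ℤ)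
          = ⌈N * (y - cellEnd b 0)⌉ - 1 := Int.toNat_of_nonneg (by omega)
      exact_mod_cast this
    have h6 := Int.ceil_lt_add_one (N * (y - cellEnd b 0))
    have h7 := Int.le_ceil (N * (y - cellEnd b 0))
    have h8 : ∀ i : ℕ, cellEnd b i = cellEnd b 0 + i / N := by
      intro i; unfold cellEnd; simp
    constructor
    · rw [h8, h5, ← lt_sub_iff_add_lt', div_lt_iff₀ hN']
      linarith
    · rw [h8]
      push_cast
      rw [h5, ← sub_le_iff_le_add', le_div_iff₀ hN']
      linarith
  have hle : ∀ p : AddCircle (1:ℝ) × AddCircle (1:ℝ), pot b p.1 + ψ p.2 ≤ dist p.1 p.2 ^ 2 := by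
    rintro ⟨x, t⟩
    obtain ⟨i, y, hy, rfl⟩ := hcover t
    have := potential_key_circle hN b hb h0 h1 i x y hy.1.le hy.2
    dsimp only
    rw [hψcell i y hy]
    linarith
  have hpl := isFinite_of_snd hsnd
  calc ∫ p, dist p.1 p.2 ^ 2 ∂(plan b) = ∫ p, (pot b p.1 + ψ p.2) ∂(plan b) := by
        rw [integral_plan b hcost, integral_plan b hsum]
        refine Finset.sum_congr rfl fun i _ => ?_
        refine setIntegral_congr_fun measurableSet_Ioc fun y hy => ?_
        dsimp only
        rw [hψcell i y hy]
        ring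
    _ = ∫ p, (pot b p.1 + ψ p.2) ∂pl :=
        integral_split ((plan_fst hN b).trans hfst.symm) (plan_snd hN b) hsnd hφ hψ
    _ ≤ ∫ p, dist p.1 p.2 ^ 2 ∂pl :=
        integral_mono (integrable_of_continuous pl hsum) (integrable_of_continuous pl hcost) hle

/-! ### The cost of the plan -/

lemma plan_cost {N : ℕ} (hN : 1 ≤ N) (b : Fin N → ℝ) (hb : Monotone b)
    (h0 : ∀ i, 0 ≤ b i) (h1 : ∀ i, b i < 1) :
    ∫ p, dist p.1 p.2 ^ 2 ∂(plan b) = ∑ i : Fin N,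
      ((1/(N:ℝ)) * (b i - ((∑ j, b j)/N - 1/2 + (i + 1/2)/N))^2 + 1/(12*(N:ℝ)^3)) := by
  have hN' : (0:ℝ) < N := by exact_mod_cast hN
  rw [integral_plan b (F := fun p => dist p.1 p.2 ^ 2) (by fun_prop)]
  refine Finset.sum_congr rfl fun i _ => ?_
  have : ∫ y in cell b i, dist (b i : AddCircle (1:ℝ)) (y : AddCircle (1:ℝ)) ^ 2
      = ∫ y in cell b i, (b i - y)^2 :=
    setIntegral_congr_fun measurableSet_Ioc fun y hy =>
      dist_sq_cell hN b hb h0 h1 i y hy.1.le hy.2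
  rw [this, cell, ← intervalIntegral.integral_of_le (cellEnd_le_succ b i),
    intervalIntegral.integral_comp_sub_left (fun x => x^2), integral_pow]
  unfold cellEnd
  push_cast
  field_simp
  ring

/-- `∑ᵢ ∑ⱼ |bᵢ - bⱼ|` for sorted points. -/
lemma sum_abs_sorted {N : ℕ} (b : Fin N → ℝ) (hb : Monotone b) :
    ∑ i, ∑ j, |b i - b j| = 2 * ∑ i : Fin N, b i * (2 * i + 1 - N) := by
  have h1 : ∀ i j : Fin N, |b i - b j|
      = b i * ((if j < i then (1:ℝ) else 0) - (if i < j then (1:ℝ) else 0))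
        + b j * ((if i < j then (1:ℝ) else 0) - (if j < i then (1:ℝ) else 0)) := by
    intro i j
    rcases lt_trichotomy i j with h | rfl | h
    · rw [abs_of_nonpos (sub_nonpos.2 (hb h.le))]; simp [h, h.le.not_gt]; ring
    · simp
    · rw [abs_of_nonneg (sub_nonneg.2 (hb h.le))]; simp [h, h.le.not_gt]; ring
  simp only [h1, Finset.sum_add_distrib]
  rw [Finset.sum_comm (f := fun i j : Fin N =>
    b j * ((if i < j then (1:ℝ) else 0) - (if j < i then (1:ℝ) else 0)))]
  simp only [← Finset.mul_sum, Finset.sum_sub_distrib, sum_ite_lt, sum_ite_gt]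
  rw [← two_mul]
  congr 1
  refine Finset.sum_congr rfl fun i _ => ?_
  ring

lemma bq_sub {N : ℕ} (b : Fin N → ℝ) (h0 : ∀ i, 0 ≤ b i) (h1 : ∀ i, b i < 1) (i j : Fin N) :
    bq ((b i : AddCircle (1:ℝ)) - (b j : AddCircle (1:ℝ))) = (b i - b j)^2 - |b i - b j| := by
  have := h0 i; have := h0 j; have := h1 i; have := h1 j
  rcases le_total (b j) (b i) with h | h
  · rw [← AddCircle.coe_sub, abs_of_nonneg (by linarith), bq_eq (by linarith) (by linarith)]
  · rw [← bq_neg, neg_sub, ← AddCircle.coe_sub, abs_of_nonpos (by linarith),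
      bq_eq (by linarith) (by linarith)]
    ring

lemma sum_fin_cast (N : ℕ) : ∑ i : Fin N, (i:ℝ) = N*(N-1)/2 := by
  rw [Fin.sum_univ_eq_sum_range (fun i => (i:ℝ))]
  induction N with
  | zero => simp
  | succ n ih => rw [Finset.sum_range_succ, ih]; push_cast; ring

lemma sum_fin_cast_sq (N : ℕ) : ∑ i : Fin N, (i:ℝ)^2 = N*(N-1)*(2*N-1)/6 := by
  rw [Fin.sum_univ_eq_sum_range (fun i => (i:ℝ)^2)]
  induction N with
  | zero => simp
  | succ n ih => rw [Finset.sum_range_succ, ih]; push_cast; ring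

lemma energy_eq_cost {N : ℕ} (hN : 1 ≤ N) (b : Fin N → ℝ) (hb : Monotone b)
    (h0 : ∀ i, 0 ≤ b i) (h1 : ∀ i, b i < 1) :
    (1/(N:ℝ)^2) * ∑ n, ∑ m, (bq ((b n : AddCircle (1:ℝ)) - (b m : AddCircle (1:ℝ))) + 1/6)/2
      = ∑ i : Fin N,
      ((1/(N:ℝ)) * (b i - ((∑ j, b j)/N - 1/2 + (i + 1/2)/N))^2 + 1/(12*(N:ℝ)^3)) := by
  have hN' : (0:ℝ) < N := by exact_mod_cast hN
  have hL : ∑ n, ∑ m, (bq ((b n : AddCircle (1:ℝ)) - (b m : AddCircle (1:ℝ))) + 1/6)/2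
      = N * ∑ i, (b i)^2 - (∑ i, b i)^2 - 2 * ∑ i : Fin N, b i * i - (1 - N) * ∑ i, b i
        + N^2/12 := by
    have e1 : ∀ n m, (bq ((b n : AddCircle (1:ℝ)) - (b m : AddCircle (1:ℝ))) + 1/6)/2
        = (b n)^2/2 + (b m)^2/2 - b n * b m - |b n - b m|/2 + 1/12 := by
      intro n m; rw [bq_sub b h0 h1]; ring
    have e2 : ∑ i : Fin N, b i * (2 * i + 1 - N)
        = 2 * ∑ i : Fin N, b i * i + (1 - N) * ∑ i, b i := by
      rw [Finset.mul_sum, Finset.mul_sum, ← Finset.sum_add_distrib]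
      refine Finset.sum_congr rfl fun i _ => ?_
      ring
    simp only [e1, Finset.sum_add_distrib, Finset.sum_sub_distrib, ← Finset.sum_div,
      sum_abs_sorted b hb, e2, ← Finset.mul_sum, ← Finset.sum_mul, Finset.sum_const,
      Finset.card_univ, Fintype.card_fin, nsmul_eq_mul]
    ring
  obtain ⟨c, hc⟩ : ∃ c : ℝ, c = (∑ j, b j)/N - 1/2 := ⟨_, rfl⟩
  have hS : ∑ j, b j = N * (c + 1/2) := by rw [hc]; field_simp; ring
  have hR : ∑ i : Fin N,
      ((1/(N:ℝ)) * (b i - (c + (i + 1/2)/N))^2 + 1/(12*(N:ℝ)^3))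
      = (1/(N:ℝ)) * (∑ i, (b i)^2 - 2 * (c + 1/(2*N)) * ∑ i, b i - 2/N * ∑ i : Fin N, b i * i
        + N * (c + 1/(2*N))^2 + 2 * (c + 1/(2*N))/N * ∑ i : Fin N, (i:ℝ)
        + 1/(N:ℝ)^2 * ∑ i : Fin N, (i:ℝ)^2) + N * (1/(12*(N:ℝ)^3)) := by
    have e1 : ∀ i : Fin N, (b i - (c + (i + 1/2)/N))^2
        = (b i)^2 - 2 * (c + 1/(2*N)) * b i - 2/N * (b i * i) + (c + 1/(2*N))^2
          + 2 * (c + 1/(2*N))/N * i + 1/(N:ℝ)^2 * (i:ℝ)^2 := by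
      intro i; field_simp; ring
    simp only [e1, Finset.sum_add_distrib, Finset.sum_sub_distrib, ← Finset.mul_sum,
      Finset.sum_const, Finset.card_univ, Fintype.card_fin, nsmul_eq_mul]
  rw [hL, ← hc, hR, sum_fin_cast, sum_fin_cast_sq, hS]
  field_simp
  ring

lemma W2sq_eq_energy {N : ℕ} (hN : 1 ≤ N) (a : Fin N → AddCircle (1:ℝ)) :
    W2sq ((N : ENNReal)⁻¹ • ∑ n, Measure.dirac (a n)) volume
      = (1/(N:ℝ)^2) * ∑ n, ∑ m, (bq (a n - a m) + 1/6)/2 := by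
  choose l hl0 hl1 hla using fun n => exists_lift (a n)
  let σ := Tuple.sort l
  let b : Fin N → ℝ := l ∘ σ
  have hb : Monotone b := Tuple.monotone_sort l
  have h0 : ∀ i, 0 ≤ b i := fun i => hl0 _
  have h1 : ∀ i, b i < 1 := fun i => hl1 _
  have hba : ∀ i, (b i : AddCircle (1:ℝ)) = a (σ i) := fun i => hla _
  have hμ : ∑ n, Measure.dirac (a n) = ∑ n, Measure.dirac (b n : AddCircle (1:ℝ)) := by
    simp only [hba]
    exact (Equiv.sum_comp σ fun n => Measure.dirac (a n)).symm
  have hE : ∑ n, ∑ m, (bq (a n - a m) + 1/6)/2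
      = ∑ n, ∑ m, (bq ((b n : AddCircle (1:ℝ)) - (b m : AddCircle (1:ℝ))) + 1/6)/2 := by
    simp only [hba]
    rw [← Equiv.sum_comp σ]
    refine Finset.sum_congr rfl fun n _ => ?_
    rw [← Equiv.sum_comp σ]
  rw [hμ, hE, energy_eq_cost hN b hb h0 h1, ← plan_cost hN b hb h0 h1]
  refine IsLeast.csInf_eq ⟨⟨plan b, plan_fst hN b, plan_snd hN b, rfl⟩, ?_⟩
  rintro c ⟨pl, hfst, hsnd, rfl⟩
  exact plan_optimal hN b hb h0 h1 hfst hsnd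

/-- For `k ≠ 0` the maximum in the weight of the discrepancy is `2π²k²/3`. -/
lemma half_dper2sq (N : ℕ) (a : Fin N → AddCircle (1:ℝ)) :
    (1/2) * dper2sq N a = ∑' k : {k : ℤ // k ≠ 0},
      (1/(4*π^2*((k:ℤ):ℝ)^2)) * ‖(1/N : ℂ) * ∑ n, fourier (k:ℤ) (a n)‖^2 := by
  rw [dper2sq, ← mul_assoc, ← tsum_mul_left]
  refine tsum_congr fun k => ?_
  have hk : (1:ℝ) ≤ ((k:ℤ):ℝ)^2 := by
    have : (1:ℤ) ≤ (k:ℤ)^2 := by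
      have := sq_pos_of_ne_zero k.2
      omega
    exact_mod_cast this
  have hπ := Real.pi_gt_three
  rw [max_eq_left (by nlinarith), ← mul_assoc]
  congr 1
  have : ((k:ℤ):ℝ) ≠ 0 := by exact_mod_cast k.2
  have := Real.pi_ne_zero
  field_simp
  norm_num

/-- Graham's formula: for points `a_1, …, a_N` on `𝕋`,
`W₂²(empirical, Vol) = ∑_{k≠0} |∑_n e^{2πika_n}/N|²/(4π²k²)`, and consequently
`W₂² = D_{per,2}²/2`, i.e. `W₂ = 2^{−1/2} D_{per,2}`. -/
theorem stmt_14 (N : ℕ) (hN : 1 ≤ N) (a : Fin N → AddCircle (1:ℝ)) :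
    W2sq ((N : ENNReal)⁻¹ • ∑ n, Measure.dirac (a n)) volume =
      ∑' k : {k : ℤ // k ≠ 0},
        (1/(4*π^2*((k:ℤ):ℝ)^2)) * ‖(1/N : ℂ) * ∑ n, fourier (k:ℤ) (a n)‖^2 ∧
    W2sq ((N : ENNReal)⁻¹ • ∑ n, Measure.dirac (a n)) volume =
      (1/2) * dper2sq N a := by
  have h := (W2sq_eq_energy hN a).trans (hasSum_energy N a).tsum_eq.symm
  exact ⟨h, h.trans (half_dper2sq N a).symm⟩
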